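/- If 1 < β ≤ 4/3, then E_{β,2}(−z) > 0 for every z > 0; in particular, the function z ↦ E_{β,2}(−z) has no zeros on (0,∞). -/

import Mathlib

/-- The two-parameter Mittag-Leffler function (real arguments)
`E_{α,β}(z) = ∑_{k=0}^∞ z^k / Γ(αk + β)`. -/
noncomputable def mlReal (α β z : ℝ) : ℝ :=
  ∑' k : ℕ, z ^ k / Real.Gamma (α * k + β)

/-!
With `α = β / 2` and `x > 0`, the real and imaginary parts of `E_{α,α}(ix)` are
`1 / Γ(α) - x² E_{2α,3α}(-x²)` and `x E_{2α,2α}(-x²)`. If `|E_{α,α}(z)| ≤ 1 / Γ(α)` for `Re z ≤ 0`,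
then `E_{2α,3α} ≥ 0` on the negative axis, and each of its zeros there is a zero of `E_{2α,2α}`.

The bound is a limit of one on power series: for `Re w ≤ 0` the coefficients of
`1 / ((1 - X) ^ α - w)` are dominated by those of `(1 - X) ^ (-α)`, by induction, because the
coefficients of `(1 - X) ^ α` after the first are nonpositive and `|1 - w| ≥ 1`.

A zero is then impossible: the fractional derivative of order `α` of the nonnegative function
`t ^ (3α - 1) E_{2α,3α}(-c t ^ (2α))` is `t ^ (2α - 1) E_{2α,2α}(-c t ^ (2α))`, and at a zero of the
former it would be strictly negative. Finally, fractional integration raises the second parameter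
from `3β / 2` to `2`.
-/

open Filter Topology Finset MeasureTheory

theorem one_add_mul_self_le_rpow_one_add_of_nonpos {s p : ℝ} (hs : -1 < s) (hp : p ≤ 0) :
    1 + p * s ≤ (1 + s) ^ p := by
  have hpos : 0 < 1 + s := by linarith
  have hlog : Real.log (1 + s) ≤ s := by linarith [Real.log_le_sub_one_of_pos hpos]
  calc 1 + p * s ≤ Real.log (1 + s) * p + 1 := by nlinarith
    _ ≤ Real.exp (Real.log (1 + s) * p) := Real.add_one_le_exp _
    _ = (1 + s) ^ p := (Real.rpow_def_of_pos hpos p).symm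

section Multichoose

theorem sum_antidiagonal_multichoose_mul {R : Type*} [CommRing R] [BinomialRing R] (x y : R)
    (n : ℕ) :
    ∑ ij ∈ antidiagonal n, Ring.multichoose x ij.1 * Ring.multichoose y ij.2 =
      Ring.multichoose (x + y) n := by
  have h := Ring.add_choose_eq n (Commute.all (-x) (-y))
  rw [← neg_add, Ring.choose_neg'] at h
  refine (smul_left_cancel (n : ℤ).negOnePow ?_).symm
  rw [h, smul_sum]
  refine sum_congr rfl fun ij hij => ?_
  rw [Ring.choose_neg', Ring.choose_neg', ← mem_antidiagonal.1 hij, Nat.cast_add,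
    Int.negOnePow_add, smul_mul_smul_comm]

theorem multichoose_eq_prod_div_factorial {K : Type*} [Field K] [CharZero K] [BinomialRing K]
    (ρ : K) (n : ℕ) : Ring.multichoose ρ n = (∏ j ∈ range n, (ρ + j)) / n.factorial := by
  have h := Ring.factorial_nsmul_multichoose_eq_ascPochhammer ρ n
  rw [Polynomial.ascPochhammer_smeval_eq_eval, nsmul_eq_mul] at h
  rw [eq_div_iff (by exact_mod_cast n.factorial_ne_zero), mul_comm, h]
  clear h
  induction n with
  | zero => simp
  | succ n ih => rw [ascPochhammer_succ_eval, ih, prod_range_succ]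

theorem multichoose_succ {K : Type*} [Field K] [CharZero K] [BinomialRing K] (ρ : K) (n : ℕ) :
    Ring.multichoose ρ (n + 1) = Ring.multichoose ρ n * ((ρ + n) / (n + 1)) := by
  rw [multichoose_eq_prod_div_factorial, multichoose_eq_prod_div_factorial, prod_range_succ,
    Nat.factorial_succ, div_mul_div_comm, Nat.cast_mul, Nat.cast_succ, mul_comm (n.factorial : K)]

variable {ρ : ℝ}

theorem multichoose_nonneg (hρ : 0 ≤ ρ) (n : ℕ) : 0 ≤ Ring.multichoose ρ n := by
  rw [multichoose_eq_prod_div_factorial]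
  exact div_nonneg (prod_nonneg fun j _ => by positivity) (by positivity)

theorem multichoose_succ_nonpos (h0 : ρ ≤ 0) (h1 : -1 ≤ ρ) (n : ℕ) :
    Ring.multichoose ρ (n + 1) ≤ 0 := by
  induction n with
  | zero => simpa using h0
  | succ n ih =>
    rw [multichoose_succ]
    refine mul_nonpos_of_nonpos_of_nonneg ih (div_nonneg ?_ (by positivity))
    push_cast
    linarith [(n.cast_nonneg : (0 : ℝ) ≤ n)]

theorem multichoose_le_add_pow (hρ : 0 ≤ ρ) (n : ℕ) : Ring.multichoose ρ n ≤ (ρ + n) ^ n := by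
  rw [multichoose_eq_prod_div_factorial]
  calc (∏ j ∈ range n, (ρ + j)) / n.factorial
      ≤ ∏ j ∈ range n, (ρ + j) :=
        div_le_self (prod_nonneg fun j _ => by positivity) (mod_cast n.factorial_pos)
    _ ≤ ∏ _j ∈ range n, (ρ + n) :=
        prod_le_prod (fun j _ => by positivity) fun j hj => by
          gcongr
          exact (mem_range.1 hj).le
    _ = (ρ + n) ^ n := by simp

end Multichoose

section InvGammaSeq

/-- Approximants of `1 / Γ ρ`: the `n`-th coefficient of `(1 - X) ^ (-ρ)`, divided by its order of
growth `n ^ (ρ - 1)`. By Bernoulli's inequality they are monotone in `n ≥ 1` for `ρ` on either side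
of `1`, which gives dominated convergence as `n → ∞`. -/
noncomputable def invGammaSeq (ρ : ℝ) (n : ℕ) : ℝ :=
  Ring.multichoose ρ n * (n : ℝ) ^ (1 - ρ)

variable {ρ : ℝ} {m n : ℕ}

theorem invGammaSeq_nonneg (hρ : 0 ≤ ρ) (n : ℕ) : 0 ≤ invGammaSeq ρ n :=
  mul_nonneg (multichoose_nonneg hρ n) (by positivity)

theorem tendsto_invGammaSeq (hρ : 0 < ρ) :
    Tendsto (invGammaSeq ρ) atTop (𝓝 (Real.Gamma ρ)⁻¹) := by
  have hlim := (tendsto_natCast_div_add_atTop ρ).mul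
    ((Real.GammaSeq_tendsto_Gamma ρ).inv₀ (Real.Gamma_pos_of_pos hρ).ne')
  rw [one_mul] at hlim
  refine hlim.congr' ?_
  filter_upwards [eventually_gt_atTop 0] with n hn
  have hn' : (0 : ℝ) < n := by exact_mod_cast hn
  have : 0 < ∏ j ∈ range n, (ρ + (j : ℝ)) := prod_pos fun j _ => by positivity
  rw [invGammaSeq, multichoose_eq_prod_div_factorial, Real.GammaSeq, prod_range_succ,
    Real.rpow_sub hn', Real.rpow_one]
  field_simp
  ring

theorem invGammaSeq_succ (ρ : ℝ) (n : ℕ) :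
    invGammaSeq ρ (n + 1) = (1 + (1 - ρ) * (-1 / (n + 1))) *
      (Ring.multichoose ρ n * ((n + 1 : ℕ) : ℝ) ^ (1 - ρ)) := by
  rw [invGammaSeq, multichoose_succ]
  field_simp
  ring

theorem invGammaSeq_eq (ρ : ℝ) (n : ℕ) :
    invGammaSeq ρ n = (1 + -1 / ((n : ℝ) + 1)) ^ (1 - ρ) *
      (Ring.multichoose ρ n * ((n + 1 : ℕ) : ℝ) ^ (1 - ρ)) := by
  have hratio : 1 + -1 / ((n : ℝ) + 1) = n / (n + 1 : ℕ) := by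
    push_cast
    field_simp
    ring
  rw [hratio, mul_left_comm, ← Real.mul_rpow (by positivity) (by positivity),
    div_mul_cancel₀ _ (by positivity), invGammaSeq]

theorem neg_one_lt_neg_one_div (hn : 1 ≤ n) : -1 < -1 / ((n : ℝ) + 1) := by
  have : (1 : ℝ) ≤ n := by exact_mod_cast hn
  rw [lt_div_iff₀ (by positivity)]
  linarith

theorem antitoneOn_invGammaSeq (hρ : 1 ≤ ρ) : AntitoneOn (invGammaSeq ρ) {n | 1 ≤ n} :=
  antitoneOn_nat_Ici_of_succ_le fun n hn => by
    rw [invGammaSeq_succ, invGammaSeq_eq ρ n]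
    exact mul_le_mul_of_nonneg_right
      (one_add_mul_self_le_rpow_one_add_of_nonpos (neg_one_lt_neg_one_div hn) (by linarith))
      (mul_nonneg (multichoose_nonneg (by linarith) n) (by positivity))

theorem monotoneOn_invGammaSeq (h0 : 0 ≤ ρ) (h1 : ρ ≤ 1) :
    MonotoneOn (invGammaSeq ρ) {n | 1 ≤ n} :=
  monotoneOn_nat_Ici_of_le_succ fun n hn => by
    rw [invGammaSeq_succ, invGammaSeq_eq ρ n]
    exact mul_le_mul_of_nonneg_right
      (rpow_one_add_le_one_add_mul_self (neg_one_lt_neg_one_div hn).le (by linarith) (by linarith))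
      (mul_nonneg (multichoose_nonneg h0 n) (by positivity))

theorem inv_Gamma_le_invGammaSeq (hρ : 1 ≤ ρ) (hm : 1 ≤ m) :
    (Real.Gamma ρ)⁻¹ ≤ invGammaSeq ρ m :=
  le_of_tendsto (tendsto_invGammaSeq (by linarith)) <|
    (eventually_ge_atTop m).mono fun _ hn => antitoneOn_invGammaSeq hρ hm (hm.trans hn) hn

theorem invGammaSeq_le_inv_Gamma (h0 : 0 < ρ) (h1 : ρ ≤ 1) (hm : 1 ≤ m) :
    invGammaSeq ρ m ≤ (Real.Gamma ρ)⁻¹ :=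
  ge_of_tendsto (tendsto_invGammaSeq h0) <|
    (eventually_ge_atTop m).mono fun _ hn => monotoneOn_invGammaSeq h0.le h1 hm (hm.trans hn) hn

theorem invGammaSeq_le_add_inv_Gamma (hρ : 0 < ρ) (hm : 1 ≤ m) (hmn : m ≤ n) :
    invGammaSeq ρ n ≤ invGammaSeq ρ m + (Real.Gamma ρ)⁻¹ := by
  rcases le_total ρ 1 with h1 | h1
  · exact (invGammaSeq_le_inv_Gamma hρ h1 (hm.trans hmn)).trans
      (le_add_of_nonneg_left (invGammaSeq_nonneg hρ.le m))
  · exact (antitoneOn_invGammaSeq h1 hm (hm.trans hmn) hmn).trans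
      (le_add_of_nonneg_right (inv_nonneg.2 (Real.Gamma_pos_of_pos hρ).le))

end InvGammaSeq

section Summability

variable {β δ : ℝ}

theorem summable_pow_mul_multichoose {r : ℝ} (hβ : 0 ≤ β) (hδ : 0 ≤ δ) (hr : ‖r‖ < 1) (n : ℕ) :
    Summable fun k : ℕ => r ^ k * Ring.multichoose (β * k + δ) n := by
  refine ((summable_pow_mul_geometric_of_norm_lt_one n hr).norm.mul_left
    ((β + δ + n) ^ n)).of_norm_bounded_eventually_nat ?_
  filter_upwards [eventually_ge_atTop 1] with k hk
  have hk' : (1 : ℝ) ≤ k := by exact_mod_cast hk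
  have hbase : β * k + δ + n ≤ (β + δ + n) * k := by
    nlinarith [mul_le_mul_of_nonneg_left hk' (add_nonneg hδ n.cast_nonneg)]
  have hle : Ring.multichoose (β * k + δ) n ≤ (β + δ + n) ^ n * (k : ℝ) ^ n := by
    rw [← mul_pow]
    exact (multichoose_le_add_pow (by positivity) n).trans (by gcongr)
  rw [norm_mul, Real.norm_of_nonneg (multichoose_nonneg (by positivity) n), norm_mul,
    norm_pow (k : ℝ), Real.norm_natCast, mul_comm, ← mul_assoc]
  gcongr

theorem invGammaSeq_mul_add {n : ℕ} (hn : 0 < n) (β δ : ℝ) (k : ℕ) :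
    invGammaSeq (β * k + δ) n =
      (n : ℝ) ^ (1 - δ) * (((n : ℝ) ^ (-β)) ^ k * Ring.multichoose (β * k + δ) n) := by
  have hn' : (0 : ℝ) < n := by exact_mod_cast hn
  rw [invGammaSeq, ← Real.rpow_mul_natCast hn'.le, ← mul_assoc, ← Real.rpow_add hn', mul_comm]
  ring_nf

theorem tendsto_natCast_rpow_neg_atTop (hβ : 0 < β) :
    Tendsto (fun n : ℕ => (n : ℝ) ^ (-β)) atTop (𝓝 0) :=
  (tendsto_rpow_neg_atTop hβ).comp tendsto_natCast_atTop_atTop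

theorem eventually_norm_mul_natCast_rpow_neg_lt_one (hβ : 0 < β) (r : ℝ) :
    ∀ᶠ n : ℕ in atTop, ‖r * (n : ℝ) ^ (-β)‖ < 1 := by
  have h := ((tendsto_natCast_rpow_neg_atTop hβ).const_mul r).norm
  rw [mul_zero, norm_zero] at h
  exact h.eventually_lt_const one_pos

theorem eventually_summable_pow_mul_invGammaSeq (hβ : 0 < β) (hδ : 0 ≤ δ) (r : ℝ) :
    ∀ᶠ n : ℕ in atTop, Summable fun k : ℕ => r ^ k * invGammaSeq (β * k + δ) n := by
  filter_upwards [eventually_norm_mul_natCast_rpow_neg_lt_one hβ r, eventually_gt_atTop 0]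
    with n hlt hn
  refine ((summable_pow_mul_multichoose hβ.le hδ hlt n).mul_left ((n : ℝ) ^ (1 - δ))).congr
    fun k => ?_
  rw [invGammaSeq_mul_add hn, mul_pow]
  ring

theorem summable_pow_div_Gamma (hβ : 0 < β) (hδ : 0 < δ) (r : ℝ) :
    Summable fun k : ℕ => r ^ k / Real.Gamma (β * k + δ) := by
  obtain ⟨n, hsum, hn⟩ := ((eventually_summable_pow_mul_invGammaSeq hβ hδ.le r).and
    (eventually_ge_atTop 1)).exists
  refine hsum.norm.of_norm_bounded_eventually_nat ?_
  filter_upwards [(tendsto_natCast_atTop_atTop.const_mul_atTop hβ).eventually_ge_atTop 1]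
    with k hk
  rw [div_eq_mul_inv, norm_mul, norm_mul,
    Real.norm_of_nonneg (inv_nonneg.2 (Real.Gamma_pos_of_pos (by linarith)).le),
    Real.norm_of_nonneg (invGammaSeq_nonneg (by linarith) n)]
  gcongr
  exact inv_Gamma_le_invGammaSeq (by linarith) hn

end Summability

section DiscreteMittagLeffler

theorem norm_le_of_norm_succ_le_sum_antidiagonal {E : Type*} [SeminormedAddCommGroup E]
    [NormedSpace ℝ E] {a p : ℕ → ℝ} {c : ℕ → E} (ha : ∀ i, 0 ≤ a i) (hzero : ‖c 0‖ ≤ p 0)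
    (hc : ∀ n, ‖c (n + 1)‖ ≤ ‖∑ ij ∈ antidiagonal n, a ij.1 • c ij.2‖)
    (hp : ∀ n, p (n + 1) = ∑ ij ∈ antidiagonal n, a ij.1 * p ij.2) (n : ℕ) :
    ‖c n‖ ≤ p n := by
  induction n using Nat.strong_induction_on with
  | _ n ih =>
    cases n with
    | zero => exact hzero
    | succ n =>
      rw [hp]
      refine (hc n).trans ((norm_sum_le _ _).trans (sum_le_sum fun ij hij => ?_))
      rw [norm_smul, Real.norm_of_nonneg (ha _)]
      exact mul_le_mul_of_nonneg_left
        (ih _ (Nat.antidiagonal.snd_lt hij)) (ha _)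

/-- The `n`-th coefficient of `(1 - X) ^ (α - δ) / ((1 - X) ^ α - w)`, expanded in powers of `w`:
the Mittag-Leffler series with `1 / Γ` replaced by a binomial coefficient. -/
noncomputable def discreteMittagLeffler (α δ : ℝ) (w : ℂ) (n : ℕ) : ℂ :=
  ∑' k : ℕ, w ^ k * (Ring.multichoose (α * k + δ) n : ℝ)

variable {α δ : ℝ} {w : ℂ}

theorem summable_discreteMittagLeffler (hα : 0 ≤ α) (hδ : 0 ≤ δ) (hw : ‖w‖ < 1) (n : ℕ) :
    Summable fun k : ℕ => w ^ k * ((Ring.multichoose (α * k + δ) n : ℝ) : ℂ) :=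
  .of_norm <| (summable_pow_mul_multichoose hα hδ (by simpa using hw : ‖‖w‖‖ < 1) n).congr
    fun k => by
      rw [norm_mul, norm_pow, Complex.norm_of_nonneg (multichoose_nonneg (by positivity) n)]

theorem discreteMittagLeffler_eq_add (hα : 0 ≤ α) (hδ : 0 ≤ δ) (hw : ‖w‖ < 1) (n : ℕ) :
    discreteMittagLeffler α δ w n =
      (Ring.multichoose δ n : ℝ) + w * discreteMittagLeffler α (δ + α) w n := by
  rw [discreteMittagLeffler, (summable_discreteMittagLeffler hα hδ hw n).tsum_eq_zero_add,
    discreteMittagLeffler, ← tsum_mul_left]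
  congr 1
  · simp
  · refine tsum_congr fun k => ?_
    rw [pow_succ', mul_assoc, show α * (k + 1 : ℕ) + δ = α * k + (δ + α) by push_cast; ring]

theorem sum_antidiagonal_multichoose_mul_discreteMittagLeffler (hα : 0 ≤ α) (hδ : 0 ≤ δ)
    (hw : ‖w‖ < 1) (γ : ℝ) (n : ℕ) :
    ∑ ij ∈ antidiagonal n, (Ring.multichoose γ ij.1 : ℝ) * discreteMittagLeffler α δ w ij.2 =
      discreteMittagLeffler α (δ + γ) w n := by
  refine (hasSum_sum fun ij _ => (summable_discreteMittagLeffler hα hδ hw ij.2).hasSum.mul_left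
    ((Ring.multichoose γ ij.1 : ℝ) : ℂ)).tsum_eq.symm.trans (tsum_congr fun k => ?_)
  rw [show α * k + (δ + γ) = γ + (α * k + δ) by ring, ← sum_antidiagonal_multichoose_mul,
    Complex.ofReal_sum, mul_sum]
  refine sum_congr rfl fun ij _ => ?_
  push_cast
  ring

theorem sum_antidiagonal_multichoose_neg_mul_discreteMittagLeffler (hα : 0 ≤ α) (hw : ‖w‖ < 1)
    (n : ℕ) :
    ∑ ij ∈ antidiagonal n, (Ring.multichoose (-α) ij.1 : ℝ) * discreteMittagLeffler α α w ij.2 =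
      (Ring.multichoose (0 : ℝ) n : ℝ) + w * discreteMittagLeffler α α w n := by
  rw [sum_antidiagonal_multichoose_mul_discreteMittagLeffler hα hα hw, add_neg_cancel,
    discreteMittagLeffler_eq_add hα le_rfl hw, zero_add]

theorem multichoose_succ_eq_sum_antidiagonal (α : ℝ) (n : ℕ) :
    Ring.multichoose α (n + 1) =
      ∑ ij ∈ antidiagonal n, -Ring.multichoose (-α) (ij.1 + 1) * Ring.multichoose α ij.2 := by
  have h := sum_antidiagonal_multichoose_mul (-α) α (n + 1)
  rw [Nat.sum_antidiagonal_succ, Ring.multichoose_zero_right, one_mul, neg_add_cancel,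
    Ring.multichoose_zero_succ] at h
  simp only [neg_mul, sum_neg_distrib]
  linarith

theorem discreteMittagLeffler_zero_mul (hα : 0 ≤ α) (hw : ‖w‖ < 1) :
    (1 - w) * discreteMittagLeffler α α w 0 = 1 := by
  have h := sum_antidiagonal_multichoose_neg_mul_discreteMittagLeffler hα hw 0
  simp only [Nat.antidiagonal_zero, sum_singleton, Ring.multichoose_zero_right,
    Complex.ofReal_one, one_mul] at h
  linear_combination h

theorem discreteMittagLeffler_succ_mul (hα : 0 ≤ α) (hw : ‖w‖ < 1) (n : ℕ) :
    (1 - w) * discreteMittagLeffler α α w (n + 1) =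
      ∑ ij ∈ antidiagonal n,
        (-Ring.multichoose (-α) (ij.1 + 1) : ℝ) • discreteMittagLeffler α α w ij.2 := by
  have h := sum_antidiagonal_multichoose_neg_mul_discreteMittagLeffler hα hw (n + 1)
  rw [Nat.sum_antidiagonal_succ, Ring.multichoose_zero_right, Ring.multichoose_zero_succ] at h
  simp only [neg_smul, sum_neg_distrib, Complex.real_smul]
  push_cast at h
  linear_combination h

theorem norm_discreteMittagLeffler_le (h0 : 0 ≤ α) (h1 : α ≤ 1) (hw : ‖w‖ < 1) (hre : w.re ≤ 0)
    (n : ℕ) : ‖discreteMittagLeffler α α w n‖ ≤ Ring.multichoose α n := by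
  have hone : 1 ≤ ‖1 - w‖ := by
    calc (1 : ℝ) ≤ (1 - w).re := by simpa using hre
      _ ≤ ‖1 - w‖ := Complex.re_le_norm _
  have hle : ∀ z : ℂ, ‖z‖ ≤ ‖(1 - w) * z‖ := fun z => by
    rw [norm_mul]
    exact le_mul_of_one_le_left (norm_nonneg z) hone
  refine norm_le_of_norm_succ_le_sum_antidiagonal
    (fun i => neg_nonneg.2 (multichoose_succ_nonpos (neg_nonpos.2 h0) (neg_le_neg h1) i))
    ?_ (fun n => ?_) (multichoose_succ_eq_sum_antidiagonal α) n
  · refine (hle _).trans ?_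
    rw [discreteMittagLeffler_zero_mul h0 hw, norm_one, Ring.multichoose_zero_right]
  · exact (hle _).trans_eq (by rw [discreteMittagLeffler_succ_mul h0 hw])

end DiscreteMittagLeffler

section MittagLeffler

/-- The two-parameter Mittag-Leffler function of a complex variable; `mlReal` is its restriction
to the real line. -/
noncomputable def mittagLeffler (α δ : ℝ) (z : ℂ) : ℂ :=
  ∑' k : ℕ, z ^ k / (Real.Gamma (α * k + δ) : ℝ)

variable {α δ : ℝ}

theorem discreteMittagLeffler_rescale {n : ℕ} (hn : 0 < n) (α δ : ℝ) (z : ℂ) :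
    ((n : ℝ) ^ (1 - δ) : ℝ) * discreteMittagLeffler α δ (z * ((n : ℝ) ^ (-α) : ℝ)) n =
      ∑' k : ℕ, z ^ k * (invGammaSeq (α * k + δ) n : ℝ) := by
  rw [discreteMittagLeffler, ← tsum_mul_left]
  refine tsum_congr fun k => ?_
  rw [invGammaSeq_mul_add hn, mul_pow]
  push_cast
  ring

/-- A discrete form of Post–Widder inversion of the Laplace transform
`s ^ (α - δ) / (s ^ α - z)`. -/
theorem tendsto_discreteMittagLeffler (hα : 0 < α) (hδ : 0 < δ) (z : ℂ) :
    Tendsto (fun n : ℕ =>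
      ((n : ℝ) ^ (1 - δ) : ℝ) * discreteMittagLeffler α δ (z * ((n : ℝ) ^ (-α) : ℝ)) n)
      atTop (𝓝 (mittagLeffler α δ z)) := by
  have hpos : ∀ k : ℕ, 0 < α * k + δ := fun k => by positivity
  obtain ⟨m, hsum, hm⟩ := ((eventually_summable_pow_mul_invGammaSeq hα hδ.le ‖z‖).and
    (eventually_ge_atTop 1)).exists
  refine Tendsto.congr' ((eventually_gt_atTop 0).mono fun n hn =>
    (discreteMittagLeffler_rescale hn α δ z).symm) ?_
  refine tendsto_tsum_of_dominated_convergence (hsum.add (summable_pow_div_Gamma hα hδ ‖z‖))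
    (fun k => ?_) ?_
  · have h := (Complex.continuous_ofReal.tendsto _).comp (tendsto_invGammaSeq (hpos k))
    rw [div_eq_mul_inv, ← Complex.ofReal_inv]
    exact h.const_mul (z ^ k)
  · filter_upwards [eventually_ge_atTop m] with n hn k
    rw [norm_mul, norm_pow, Complex.norm_of_nonneg (invGammaSeq_nonneg (hpos k).le n),
      div_eq_mul_inv, ← mul_add]
    exact mul_le_mul_of_nonneg_left (invGammaSeq_le_add_inv_Gamma (hpos k) hm hn) (by positivity)

theorem norm_mittagLeffler_le (h0 : 0 < α) (h1 : α ≤ 1) {z : ℂ} (hz : z.re ≤ 0) :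
    ‖mittagLeffler α α z‖ ≤ (Real.Gamma α)⁻¹ := by
  refine le_of_tendsto_of_tendsto (tendsto_discreteMittagLeffler h0 h0 z).norm
    (tendsto_invGammaSeq h0) ?_
  filter_upwards [eventually_norm_mul_natCast_rpow_neg_lt_one h0 ‖z‖] with n hn
  rw [norm_mul, Complex.norm_of_nonneg (by positivity), mul_comm, invGammaSeq]
  refine mul_le_mul_of_nonneg_right ?_ (by positivity)
  refine norm_discreteMittagLeffler_le h0.le h1 ?_ ?_ n
  · simpa using hn
  · rw [Complex.re_mul_ofReal]
    exact mul_nonpos_of_nonpos_of_nonneg hz (by positivity)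

theorem hasSum_mlReal (hα : 0 < α) (hδ : 0 < δ) (x : ℝ) :
    HasSum (fun k : ℕ => x ^ k / Real.Gamma (α * k + δ)) (mlReal α δ x) :=
  (summable_pow_div_Gamma hα hδ x).hasSum

theorem mittagLeffler_ofReal_mul_I (hα : 0 < α) (hδ : 0 < δ) (x : ℝ) :
    mittagLeffler α δ (x * Complex.I) =
      mlReal (2 * α) δ (-x ^ 2) + (x * mlReal (2 * α) (δ + α) (-x ^ 2) : ℝ) * Complex.I := by
  have hsq : (x * Complex.I) ^ 2 = ((-x ^ 2 : ℝ) : ℂ) := by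
    push_cast
    rw [mul_pow, Complex.I_sq, mul_neg_one]
  have heven := Complex.hasSum_ofReal.2
    (hasSum_mlReal (mul_pos two_pos hα) hδ (-x ^ 2))
  have hodd := (Complex.hasSum_ofReal.2
    ((hasSum_mlReal (mul_pos two_pos hα) (add_pos hδ hα) (-x ^ 2)).mul_left x)).mul_right
      Complex.I
  refine (HasSum.even_add_odd (heven.congr_fun fun k => ?_) (hodd.congr_fun fun k => ?_)).tsum_eq
  · rw [pow_mul, hsq, show α * (2 * k : ℕ) + δ = 2 * α * k + δ by push_cast; ring]
    push_cast
    rfl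
  · rw [pow_succ, pow_mul, hsq,
      show α * (2 * k + 1 : ℕ) + δ = 2 * α * k + (δ + α) by push_cast; ring]
    push_cast
    ring

theorem mlReal_eq_inv_Gamma_add (hα : 0 < α) (hδ : 0 < δ) (x : ℝ) :
    mlReal α δ x = (Real.Gamma δ)⁻¹ + x * mlReal α (δ + α) x := by
  rw [mlReal, (summable_pow_div_Gamma hα hδ x).tsum_eq_zero_add, mlReal, ← tsum_mul_left]
  congr 1
  · simp
  · refine tsum_congr fun k => ?_
    rw [pow_succ', mul_div_assoc, show α * (k + 1 : ℕ) + δ = α * k + (δ + α) by push_cast; ring]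

theorem mlReal_sq_add_sq_le (h0 : 0 < α) (h1 : α ≤ 1) (x : ℝ) :
    ((Real.Gamma α)⁻¹ - x ^ 2 * mlReal (2 * α) (3 * α) (-x ^ 2)) ^ 2 +
      (x * mlReal (2 * α) (2 * α) (-x ^ 2)) ^ 2 ≤ (Real.Gamma α)⁻¹ ^ 2 := by
  have hnorm := norm_mittagLeffler_le h0 h1 (z := x * Complex.I) (by simp)
  rw [mittagLeffler_ofReal_mul_I h0 h0, Complex.norm_add_mul_I, ← two_mul,
    mlReal_eq_inv_Gamma_add (by positivity) h0, show α + 2 * α = 3 * α by ring, neg_mul,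
    ← sub_eq_add_neg] at hnorm
  exact (Real.sqrt_le_left (inv_nonneg.2 (Real.Gamma_pos_of_pos h0).le)).1 hnorm

theorem mlReal_three_mul_nonneg (h0 : 0 < α) (h1 : α ≤ 1) {y : ℝ} (hy : 0 < y) :
    0 ≤ mlReal (2 * α) (3 * α) (-y) := by
  have hsq := mlReal_sq_add_sq_le h0 h1 √y
  rw [Real.sq_sqrt hy.le] at hsq
  have hle := (abs_le_of_sq_le_sq' ((le_add_of_nonneg_right (sq_nonneg _)).trans hsq)
    (inv_nonneg.2 (Real.Gamma_pos_of_pos h0).le)).2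
  exact nonneg_of_mul_nonneg_right (by linarith) hy

theorem mlReal_two_mul_eq_zero_of_three_mul (h0 : 0 < α) (h1 : α ≤ 1) {y : ℝ} (hy : 0 < y)
    (hzero : mlReal (2 * α) (3 * α) (-y) = 0) : mlReal (2 * α) (2 * α) (-y) = 0 := by
  have hsq := mlReal_sq_add_sq_le h0 h1 √y
  rw [Real.sq_sqrt hy.le, hzero, mul_zero, sub_zero, add_le_iff_nonpos_right] at hsq
  have h := pow_eq_zero_iff two_ne_zero |>.1 (hsq.antisymm (sq_nonneg _))
  exact (mul_eq_zero.1 h).resolve_left (Real.sqrt_pos.2 hy).ne'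

end MittagLeffler

section Regularity

variable {β δ : ℝ}

theorem differentiable_mlReal (hβ : 0 < β) (hδ : 0 < δ) : Differentiable ℝ (mlReal β δ) := by
  let p := FormalMultilinearSeries.ofScalars ℝ fun k : ℕ => (Real.Gamma (β * k + δ))⁻¹
  have hsum : mlReal β δ = p.sum := by
    ext x
    refine Eq.trans ?_ (FormalMultilinearSeries.ofScalars_sum_eq _ x).symm
    simp only [mlReal, div_eq_inv_mul, smul_eq_mul]
  have hradius : p.radius = ⊤ :=
    p.radius_eq_top_of_summable_norm fun r =>
      (summable_pow_div_Gamma hβ hδ r).norm.congr fun k => by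
        rw [FormalMultilinearSeries.ofScalars_norm, norm_div, norm_pow, NNReal.norm_eq, norm_inv,
          div_eq_inv_mul]
  have hdiff := (p.hasFPowerSeriesOnBall (hradius ▸ ENNReal.zero_lt_top)).differentiableOn
  rwa [← hsum, hradius, Metric.eball_top, differentiableOn_univ] at hdiff

theorem continuous_mlReal_mul_rpow (hβ : 0 < β) (hδ : 0 < δ) (c : ℝ) :
    Continuous fun t : ℝ => mlReal β δ (c * t ^ β) :=
  (differentiable_mlReal hβ hδ).continuous.comp
    (continuous_const.mul (Real.continuous_rpow_const hβ.le))

theorem mlReal_zero_right (β δ : ℝ) : mlReal β δ 0 = (Real.Gamma δ)⁻¹ := by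
  rw [mlReal, tsum_eq_single 0 fun k hk => by rw [zero_pow hk, zero_div]]
  simp

theorem mlReal_pos_of_nonneg (hβ : 0 < β) (hδ : 0 < δ) {x : ℝ} (hx : 0 ≤ x) :
    0 < mlReal β δ x := by
  have hΓ : ∀ k : ℕ, 0 < Real.Gamma (β * k + δ) := fun k => Real.Gamma_pos_of_pos (by positivity)
  refine (summable_pow_div_Gamma hβ hδ x).tsum_pos (fun k => ?_) 0 ?_
  · exact div_nonneg (pow_nonneg hx k) (hΓ k).le
  · simpa using Real.Gamma_pos_of_pos hδ

/-- The function `t ^ (δ - 1) E_{β,δ}(c t ^ β)`, whose Laplace transform is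
`s ^ (β - δ) / (s ^ β - c)`. -/
noncomputable def mlKernel (β δ c t : ℝ) : ℝ :=
  t ^ (δ - 1) * mlReal β δ (c * t ^ β)

theorem mlKernel_one_right (β δ c : ℝ) : mlKernel β δ c 1 = mlReal β δ c := by
  simp [mlKernel]

theorem hasSum_mlKernel (hβ : 0 < β) (hδ : 0 < δ) (c : ℝ) {t : ℝ} (ht : 0 < t) :
    HasSum (fun k : ℕ => c ^ k / Real.Gamma (β * k + δ) * t ^ (β * k + δ - 1))
      (mlKernel β δ c t) := by
  refine ((hasSum_mlReal hβ hδ (c * t ^ β)).mul_left (t ^ (δ - 1))).congr_fun fun k => ?_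
  rw [mul_pow, ← Real.rpow_mul_natCast ht.le, add_sub_assoc, Real.rpow_add ht]
  ring

theorem differentiableAt_mlKernel (hβ : 0 < β) (hδ : 0 < δ) (c : ℝ) {t : ℝ} (ht : 0 < t) :
    DifferentiableAt ℝ (mlKernel β δ c) t :=
  (Real.differentiableAt_rpow_const_of_ne _ ht.ne').mul
    ((differentiable_mlReal hβ hδ _).comp t
      ((Real.differentiableAt_rpow_const_of_ne _ ht.ne').const_mul c))

theorem stronglyMeasurable_mlKernel (hβ : 0 < β) (hδ : 0 < δ) (c : ℝ) :
    StronglyMeasurable (mlKernel β δ c) :=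
  ((measurable_id.pow_const _).mul
    (continuous_mlReal_mul_rpow hβ hδ c).measurable).stronglyMeasurable

theorem eventually_mlKernel_pos (hβ : 0 < β) (hδ : 0 < δ) (c : ℝ) :
    ∀ᶠ t in 𝓝[>] 0, 0 < mlKernel β δ c t := by
  have hlim := (continuous_mlReal_mul_rpow hβ hδ c).tendsto 0
  rw [Real.zero_rpow hβ.ne', mul_zero, mlReal_zero_right] at hlim
  have hpos := hlim.eventually_const_lt (inv_pos.2 (Real.Gamma_pos_of_pos hδ))
  filter_upwards [hpos.filter_mono nhdsWithin_le_nhds, self_mem_nhdsWithin] with t hml ht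
  exact mul_pos (Real.rpow_pos_of_pos ht _) hml

end Regularity

section RiemannLiouville

/-- The Riemann–Liouville fractional integral of order `σ`, based at `0`. -/
noncomputable def riemannLiouville (σ : ℝ) (f : ℝ → ℝ) (t : ℝ) : ℝ :=
  (Real.Gamma σ)⁻¹ * ∫ s in (0 : ℝ)..t, (t - s) ^ (σ - 1) * f s

theorem riemannLiouville_one (f : ℝ → ℝ) (t : ℝ) :
    riemannLiouville 1 f t = ∫ s in (0 : ℝ)..t, f s := by
  simp [riemannLiouville]

variable {σ t : ℝ}

theorem integral_sub_rpow_mul_rpow {ρ : ℝ} (hσ : 0 < σ) (hρ : 0 < ρ) (ht : 0 < t) :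
    ∫ s in (0 : ℝ)..t, (t - s) ^ (σ - 1) * s ^ (ρ - 1) =
      t ^ (ρ + σ - 1) * ProbabilityTheory.beta ρ σ := by
  have hcast : ∫ s in (0 : ℝ)..t, (s : ℂ) ^ ((ρ : ℂ) - 1) * ((t : ℂ) - s) ^ ((σ : ℂ) - 1) =
      ∫ s in (0 : ℝ)..t, (((t - s) ^ (σ - 1) * s ^ (ρ - 1) : ℝ) : ℂ) := by
    refine intervalIntegral.integral_congr fun s hs => ?_
    rw [Set.uIcc_of_le ht.le] at hs
    push_cast [Complex.ofReal_cpow hs.1, Complex.ofReal_cpow (sub_nonneg.2 hs.2)]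
    ring
  have hbeta := Complex.betaIntegral_scaled ρ σ ht
  rw [hcast, intervalIntegral.integral_ofReal,
    Complex.betaIntegral_eq_Gamma_mul_div _ _ (by simpa) (by simpa)] at hbeta
  apply Complex.ofReal_injective
  rw [hbeta, ProbabilityTheory.beta]
  push_cast [Complex.ofReal_cpow ht.le, ← Complex.Gamma_ofReal]
  rfl

theorem intervalIntegrable_sub_rpow_mul_rpow {ρ : ℝ} (hσ : 0 < σ) (hρ : 0 < ρ) (ht : 0 < t) :
    IntervalIntegrable (fun s => (t - s) ^ (σ - 1) * s ^ (ρ - 1)) volume 0 t := by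
  refine intervalIntegral.intervalIntegrable_of_integral_ne_zero ?_
  rw [integral_sub_rpow_mul_rpow hσ hρ ht]
  exact (mul_pos (Real.rpow_pos_of_pos ht _) (ProbabilityTheory.beta_pos hρ hσ)).ne'

theorem riemannLiouville_rpow {ρ : ℝ} (hσ : 0 < σ) (hρ : 0 < ρ) (ht : 0 < t) :
    riemannLiouville σ (fun s => s ^ (ρ - 1)) t =
      Real.Gamma ρ / Real.Gamma (ρ + σ) * t ^ (ρ + σ - 1) := by
  have := (Real.Gamma_pos_of_pos hσ).ne'
  rw [riemannLiouville, integral_sub_rpow_mul_rpow hσ hρ ht, ProbabilityTheory.beta]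
  field_simp

variable {β δ : ℝ}

theorem intervalIntegrable_sub_rpow_mul_mlKernel (hβ : 0 < β) (hδ : 0 < δ) (c : ℝ) (hσ : 0 < σ)
    (ht : 0 < t) :
    IntervalIntegrable (fun s => (t - s) ^ (σ - 1) * mlKernel β δ c s) volume 0 t := by
  simpa only [mlKernel, ← mul_assoc] using
    (intervalIntegrable_sub_rpow_mul_rpow hσ hδ ht).mul_continuousOn
      (continuous_mlReal_mul_rpow hβ hδ c).continuousOn

theorem intervalIntegrable_mlKernel (hβ : 0 < β) (hδ : 0 < δ) (c : ℝ) (ht : 0 < t) :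
    IntervalIntegrable (mlKernel β δ c) volume 0 t := by
  simpa using intervalIntegrable_sub_rpow_mul_mlKernel hβ hδ c one_pos ht

theorem hasSum_integral_sub_rpow_mul_mlKernel (hβ : 0 < β) (hδ : 0 < δ) (c : ℝ) (hσ : 0 < σ)
    (ht : 0 < t) :
    HasSum (fun k : ℕ => ∫ s in (0 : ℝ)..t,
        (t - s) ^ (σ - 1) * (c ^ k / Real.Gamma (β * k + δ) * s ^ (β * k + δ - 1)))
      (∫ s in (0 : ℝ)..t, (t - s) ^ (σ - 1) * mlKernel β δ c s) := by
  have hdom : ∀ s ∈ Set.uIoc 0 t, HasSum (fun k : ℕ =>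
      (t - s) ^ (σ - 1) * (|c| ^ k / Real.Gamma (β * k + δ) * s ^ (β * k + δ - 1)))
      ((t - s) ^ (σ - 1) * mlKernel β δ |c| s) := fun s hs =>
    (hasSum_mlKernel hβ hδ |c| (Set.uIoc_of_le ht.le ▸ hs).1).mul_left _
  refine intervalIntegral.hasSum_integral_of_dominated_convergence
    (fun (k : ℕ) s =>
      (t - s) ^ (σ - 1) * (|c| ^ k / Real.Gamma (β * k + δ) * s ^ (β * k + δ - 1)))
    (fun k => ?_) (fun k => .of_forall fun s hs => ?_)
    (.of_forall fun s hs => (hdom s hs).summable) ?_ (.of_forall fun s hs => ?_)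
  · exact (by fun_prop : Measurable _).aestronglyMeasurable
  · rw [Set.uIoc_of_le ht.le] at hs
    have hΓ := (Real.Gamma_pos_of_pos (by positivity : 0 < β * k + δ)).le
    rw [norm_mul, norm_mul, norm_div, norm_pow, Real.norm_of_nonneg hΓ, Real.norm_eq_abs c,
      Real.norm_of_nonneg (Real.rpow_nonneg (sub_nonneg.2 hs.2) _),
      Real.norm_of_nonneg (Real.rpow_nonneg hs.1.le _)]
  · exact (intervalIntegrable_sub_rpow_mul_mlKernel hβ hδ |c| hσ ht).congr fun s hs =>
      (hdom s hs).tsum_eq.symm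
  · exact (hasSum_mlKernel hβ hδ c (Set.uIoc_of_le ht.le ▸ hs).1).mul_left _

theorem riemannLiouville_mlKernel (hβ : 0 < β) (hδ : 0 < δ) (c : ℝ) (hσ : 0 < σ) (ht : 0 < t) :
    riemannLiouville σ (mlKernel β δ c) t = mlKernel β (δ + σ) c t := by
  refine ((hasSum_integral_sub_rpow_mul_mlKernel hβ hδ c hσ ht).mul_left
    (Real.Gamma σ)⁻¹).unique ?_
  refine (hasSum_mlKernel hβ (add_pos hδ hσ) c ht).congr_fun fun k => ?_
  have hρ : 0 < β * k + δ := by positivity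
  have hΓ := (Real.Gamma_pos_of_pos hρ).ne'
  have hpow := riemannLiouville_rpow hσ hρ ht
  rw [riemannLiouville] at hpow
  simp_rw [mul_left_comm _ (c ^ k / _)]
  rw [intervalIntegral.integral_const_mul, mul_left_comm, hpow, ← add_assoc]
  field_simp

theorem hasDerivAt_mlKernel (hβ : 0 < β) (hδ : 0 < δ) (c : ℝ) (ht : 0 < t) :
    HasDerivAt (mlKernel β (δ + 1) c) (mlKernel β δ c t) t := by
  refine (intervalIntegral.integral_hasDerivAt_right (intervalIntegrable_mlKernel hβ hδ c ht)
    (stronglyMeasurable_mlKernel hβ hδ c).stronglyMeasurableAtFilter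
    (differentiableAt_mlKernel hβ hδ c ht).continuousAt).congr_of_eventuallyEq ?_
  filter_upwards [lt_mem_nhds ht] with u hu
  rw [← riemannLiouville_one, riemannLiouville_mlKernel hβ hδ c one_pos hu]

end RiemannLiouville

section ExtremumPrinciple

theorem rpow_add_mul_sub_le_rpow {x y p : ℝ} (hx : 0 < x) (hy : 0 < y) (hp : p ≤ 0) :
    y ^ p + p * y ^ (p - 1) * (x - y) ≤ x ^ p := by
  have hbern := one_add_mul_self_le_rpow_one_add_of_nonpos (s := x / y - 1)
    (by linarith [div_pos hx hy]) hp
  rw [add_sub_cancel, Real.div_rpow hx.le hy.le, le_div_iff₀ (by positivity)] at hbern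
  refine le_of_eq_of_le ?_ hbern
  rw [Real.rpow_sub_one hy.ne']
  field_simp

variable {f : ℝ → ℝ} {σ t h : ℝ}

theorem integral_sub_rpow_mul_sub_le (hσ : σ ≤ 1) (ht : 0 ≤ t) (hh0 : 0 < h) (hh1 : h ≤ 1)
    (hf : ∀ s ∈ Set.Ioo 0 t, 0 ≤ f s) (hfi : IntervalIntegrable f volume 0 t)
    (hfi0 : IntervalIntegrable (fun s => (t - s) ^ (σ - 1) * f s) volume 0 t)
    (hfih : IntervalIntegrable (fun s => (t + h - s) ^ (σ - 1) * f s) volume 0 t) :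
    (∫ s in (0 : ℝ)..t, (t + h - s) ^ (σ - 1) * f s) - ∫ s in (0 : ℝ)..t, (t - s) ^ (σ - 1) * f s
      ≤ -((1 - σ) * (t + 1) ^ (σ - 2) * ∫ s in (0 : ℝ)..t, f s) * h := by
  have hkernel : ∀ s ∈ Set.Ioo 0 t, (t + h - s) ^ (σ - 1) - (t - s) ^ (σ - 1) ≤
      -((1 - σ) * (t + 1) ^ (σ - 2) * h) := fun s hs => by
    have htangent := rpow_add_mul_sub_le_rpow (sub_pos.2 hs.2)
      (by linarith [hs.2] : 0 < t + h - s) (sub_nonpos.2 hσ)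
    have hmono : (t + 1) ^ (σ - 2) ≤ (t + h - s) ^ (σ - 2) :=
      Real.rpow_le_rpow_of_nonpos (by linarith [hs.2]) (by linarith [hs.1]) (by linarith)
    rw [show σ - 1 - 1 = σ - 2 by ring] at htangent
    have := mul_le_mul_of_nonneg_left hmono (mul_nonneg (sub_nonneg.2 hσ) hh0.le)
    linarith
  rw [← intervalIntegral.integral_sub hfih hfi0]
  calc ∫ s in (0 : ℝ)..t, ((t + h - s) ^ (σ - 1) * f s - (t - s) ^ (σ - 1) * f s)
      ≤ ∫ s in (0 : ℝ)..t, -((1 - σ) * (t + 1) ^ (σ - 2) * h) * f s :=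
        intervalIntegral.integral_mono_on_of_le_Ioo ht (hfih.sub hfi0) (hfi.const_mul _)
          fun s hs => by
            rw [← sub_mul]
            exact mul_le_mul_of_nonneg_right (hkernel s hs) (hf s hs)
    _ = -((1 - σ) * (t + 1) ^ (σ - 2) * ∫ s in (0 : ℝ)..t, f s) * h := by
        rw [intervalIntegral.integral_const_mul]
        ring

theorem integral_sub_rpow_mul_le_of_le {M : ℝ} (hσ : 0 < σ) (hh : 0 ≤ h)
    (hf : ∀ s ∈ Set.Icc t (t + h), f s ≤ M)
    (hfi : IntervalIntegrable (fun s => (t + h - s) ^ (σ - 1) * f s) volume t (t + h)) :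
    ∫ s in t..(t + h), (t + h - s) ^ (σ - 1) * f s ≤ h ^ σ / σ * M := by
  have hpow : ∫ s in t..(t + h), (t + h - s) ^ (σ - 1) = h ^ σ / σ := by
    rw [intervalIntegral.integral_comp_sub_left (fun s => s ^ (σ - 1)) (t + h), sub_self,
      add_sub_cancel_left, integral_rpow (Or.inl (by linarith)), sub_add_cancel,
      Real.zero_rpow hσ.ne', sub_zero]
  have hpowi : IntervalIntegrable (fun s => (t + h - s) ^ (σ - 1)) volume t (t + h) := by
    simpa using (intervalIntegral.intervalIntegrable_rpow' (a := h) (b := 0)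
      (by linarith : -1 < σ - 1)).comp_sub_left (t + h)
  rw [← hpow, ← intervalIntegral.integral_mul_const]
  refine intervalIntegral.integral_mono_on (by linarith) hfi (hpowi.mul_const M) fun s hs => ?_
  exact mul_le_mul_of_nonneg_left (hf s hs) (Real.rpow_nonneg (sub_nonneg.2 hs.2) _)

theorem riemannLiouville_add_sub_le {M : ℝ} (h0 : 0 < σ) (h1 : σ ≤ 1) (ht : 0 ≤ t) (hh0 : 0 < h)
    (hh1 : h ≤ 1) (hf : ∀ s ∈ Set.Ioo 0 t, 0 ≤ f s) (hM : ∀ s ∈ Set.Icc t (t + h), f s ≤ M * h)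
    (hfi : IntervalIntegrable f volume 0 t)
    (hfi0 : IntervalIntegrable (fun s => (t - s) ^ (σ - 1) * f s) volume 0 t)
    (hfih : IntervalIntegrable (fun s => (t + h - s) ^ (σ - 1) * f s) volume 0 (t + h)) :
    riemannLiouville σ f (t + h) - riemannLiouville σ f t ≤ (Real.Gamma σ)⁻¹ *
      (h ^ σ / σ * M - (1 - σ) * (t + 1) ^ (σ - 2) * ∫ s in (0 : ℝ)..t, f s) * h := by
  have hmem : t ∈ Set.uIcc 0 (t + h) := by
    rw [Set.uIcc_of_le (by linarith)]
    exact ⟨ht, by linarith⟩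
  have hpast := hfih.mono_set (Set.uIcc_subset_uIcc_left hmem)
  have hrecent := hfih.mono_set (Set.uIcc_subset_uIcc_right hmem)
  rw [riemannLiouville, riemannLiouville, ← mul_sub, mul_assoc,
    ← intervalIntegral.integral_add_adjacent_intervals hpast hrecent]
  refine mul_le_mul_of_nonneg_left ?_ (inv_nonneg.2 (Real.Gamma_pos_of_pos h0).le)
  have := integral_sub_rpow_mul_sub_le h1 ht hh0 hh1 hf hfi hfi0 hpast
  have := integral_sub_rpow_mul_le_of_le h0 hh0.le hM hrecent
  linarith

theorem exists_eventually_forall_Icc_le_mul (hft : f t = 0) (hd : DifferentiableAt ℝ f t) :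
    ∃ C, ∀ᶠ h in 𝓝[>] 0, ∀ s ∈ Set.Icc t (t + h), f s ≤ C * h := by
  obtain ⟨C, hC0, hC⟩ := hd.isBigO_sub.exists_pos
  obtain ⟨ε, hε, hball⟩ := Metric.eventually_nhds_iff.1 hC.bound
  refine ⟨C, ?_⟩
  filter_upwards [Ioo_mem_nhdsGT hε] with h hh s hs
  have hst : |s - t| ≤ h := abs_le.2 ⟨by linarith [hs.1, hh.1], by linarith [hs.2]⟩
  have hbound := hball (hst.trans_lt hh.2)
  rw [hft, sub_zero, Real.norm_eq_abs, Real.norm_eq_abs] at hbound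
  exact (le_abs_self _).trans (hbound.trans (by gcongr))

/-- Extremum principle for the fractional derivative of order `1 - σ`: moving past `t` decreases
the weight of all the mass that `f` has in the past by an amount of order `h`, while the interval
`[t, t + h]` contributes only `O(h ^ (1 + σ))`. -/
theorem neg_of_hasDerivAt_riemannLiouville {d : ℝ} (h0 : 0 < σ) (h1 : σ < 1) (ht : 0 ≤ t)
    (hf : ∀ s ∈ Set.Ioo 0 t, 0 ≤ f s) (hft : f t = 0) (hd : DifferentiableAt ℝ f t)
    (hfi : ∀ s, t ≤ s → IntervalIntegrable (fun r => (s - r) ^ (σ - 1) * f r) volume 0 s)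
    (hpos : 0 < ∫ s in (0 : ℝ)..t, f s) (hderiv : HasDerivAt (riemannLiouville σ f) d t) :
    d < 0 := by
  obtain ⟨C, hC⟩ := exists_eventually_forall_Icc_le_mul hft hd
  set κ := (1 - σ) * (t + 1) ^ (σ - 2) * ∫ s in (0 : ℝ)..t, f s
  have hκ0 : 0 < κ := mul_pos (mul_pos (sub_pos.2 h1) (by positivity)) hpos
  have hslope : ∀ᶠ h in 𝓝[>] (0 : ℝ),
      h⁻¹ • (riemannLiouville σ f (t + h) - riemannLiouville σ f t) ≤
        (Real.Gamma σ)⁻¹ * (h ^ σ / σ * C - κ) := by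
    filter_upwards [hC, Ioo_mem_nhdsGT one_pos] with h hM hh
    rw [smul_eq_mul, inv_mul_le_iff₀ hh.1, mul_comm h]
    exact riemannLiouville_add_sub_le h0 h1.le ht hh.1 hh.2.le hf hM
      (intervalIntegral.intervalIntegrable_of_integral_ne_zero hpos.ne') (hfi t le_rfl)
      (hfi (t + h) (by linarith [hh.1]))
  have hbound : Tendsto (fun h : ℝ => (Real.Gamma σ)⁻¹ * (h ^ σ / σ * C - κ)) (𝓝[>] 0)
      (𝓝 ((Real.Gamma σ)⁻¹ * (0 ^ σ / σ * C - κ))) :=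
    ((((((Real.continuous_rpow_const h0.le).div_const σ).mul_const C).sub
      continuous_const).const_mul _).tendsto 0).mono_left nhdsWithin_le_nhds
  have hle := le_of_tendsto_of_tendsto hderiv.tendsto_slope_zero_right hbound hslope
  rw [Real.zero_rpow h0.ne', zero_div, zero_mul, zero_sub, mul_neg] at hle
  exact hle.trans_lt (neg_neg_of_pos (mul_pos (inv_pos.2 (Real.Gamma_pos_of_pos h0)) hκ0))

end ExtremumPrinciple

section Positivity

variable {α β δ x : ℝ}

theorem integral_pos_of_eventually_pos {f : ℝ → ℝ} {a b : ℝ} (hab : a < b)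
    (hfi : IntervalIntegrable f volume a b) (hf : ∀ s ∈ Set.Ioc a b, 0 ≤ f s)
    (hpos : ∀ᶠ s in 𝓝[>] a, 0 < f s) : 0 < ∫ s in a..b, f s := by
  obtain ⟨u, hu, hsub⟩ := (mem_nhdsGT_iff_exists_Ioo_subset' hab).1
    (inter_mem hpos (Ioo_mem_nhdsGT hab))
  rw [intervalIntegral.integral_pos_iff_support_of_nonneg_ae' ?_ hfi]
  · refine ⟨hab, (Measure.measure_Ioo_pos volume).2 hu |>.trans_le (measure_mono fun s hs => ?_)⟩
    exact ⟨(hsub hs).1.ne', Set.Ioo_subset_Ioc_self (hsub hs).2⟩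
  · rw [Set.uIoc_of_le hab.le]
    exact ae_restrict_of_forall_mem measurableSet_Ioc hf

theorem mlKernel_three_mul_nonneg (h0 : 0 < α) (h1 : α ≤ 1) (hx : x < 0) {t : ℝ} (ht : 0 < t) :
    0 ≤ mlKernel (2 * α) (3 * α) x t := by
  have h := mlReal_three_mul_nonneg h0 h1 (y := -x * t ^ (2 * α))
    (mul_pos (neg_pos.2 hx) (Real.rpow_pos_of_pos ht _))
  rw [neg_mul, neg_neg] at h
  exact mul_nonneg (Real.rpow_nonneg ht.le _) h

theorem integral_mlKernel_three_mul_pos (h0 : 0 < α) (h1 : α ≤ 1) (hx : x < 0) {t : ℝ}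
    (ht : 0 < t) : 0 < ∫ s in (0 : ℝ)..t, mlKernel (2 * α) (3 * α) x s := by
  have hβ : 0 < 2 * α := by positivity
  have hδ : 0 < 3 * α := by positivity
  exact integral_pos_of_eventually_pos ht (intervalIntegrable_mlKernel hβ hδ x ht)
    (fun s hs => mlKernel_three_mul_nonneg h0 h1 hx hs.1) (eventually_mlKernel_pos hβ hδ x)

theorem mlReal_three_mul_pos (h0 : 0 < α) (h1 : α < 1) (hx : x < 0) :
    0 < mlReal (2 * α) (3 * α) x := by
  have hβ : 0 < 2 * α := by positivity
  have hδ : 0 < 3 * α := by positivity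
  have hσ : 0 < 1 - α := sub_pos.2 h1
  have hnonneg := mlReal_three_mul_nonneg h0 h1.le (neg_pos.2 hx)
  have hvanish := mlReal_two_mul_eq_zero_of_three_mul h0 h1.le (neg_pos.2 hx)
  rw [neg_neg] at hnonneg hvanish
  refine hnonneg.lt_of_ne' fun hzero => lt_irrefl (0 : ℝ) ?_
  rw [← mlKernel_one_right] at hzero
  have hderiv : HasDerivAt (riemannLiouville (1 - α) (mlKernel (2 * α) (3 * α) x)) 0 1 := by
    have h := hasDerivAt_mlKernel hβ hβ x one_pos
    rw [mlKernel_one_right, hvanish (by rwa [mlKernel_one_right] at hzero)] at h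
    refine h.congr_of_eventuallyEq ?_
    filter_upwards [lt_mem_nhds one_pos] with s hs
    rw [riemannLiouville_mlKernel hβ hδ x hσ hs]
    ring_nf
  exact neg_of_hasDerivAt_riemannLiouville hσ (by linarith) zero_le_one
    (fun s hs => mlKernel_three_mul_nonneg h0 h1.le hx hs.1) hzero
    (differentiableAt_mlKernel hβ hδ x one_pos)
    (fun s hs => intervalIntegrable_sub_rpow_mul_mlKernel hβ hδ x hσ (by linarith))
    (integral_mlKernel_three_mul_pos h0 h1.le hx one_pos) hderiv

theorem mlReal_add_pos (hβ : 0 < β) (hδ : 0 < δ) {σ : ℝ} (hσ : 0 < σ)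
    (hpos : ∀ y < 0, 0 < mlReal β δ y) (hx : x < 0) : 0 < mlReal β (δ + σ) x := by
  rw [← mlKernel_one_right, ← riemannLiouville_mlKernel hβ hδ x hσ one_pos]
  refine mul_pos (inv_pos.2 (Real.Gamma_pos_of_pos hσ)) ?_
  refine intervalIntegral.intervalIntegral_pos_of_pos_on
    (intervalIntegrable_sub_rpow_mul_mlKernel hβ hδ x hσ one_pos) (fun s hs => ?_) one_pos
  have hs0 : 0 < s ^ β := Real.rpow_pos_of_pos hs.1 _
  exact mul_pos (Real.rpow_pos_of_pos (sub_pos.2 hs.2) _)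
    (mul_pos (Real.rpow_pos_of_pos hs.1 _) (hpos _ (mul_neg_of_neg_of_pos hx hs0)))

theorem mlReal_beta2_pos_general (hβ : 0 < β) (hβ' : β < 2) (hδ : 3 / 2 * β ≤ δ) (x : ℝ) :
    0 < mlReal β δ x := by
  have hpos : ∀ y < 0, 0 < mlReal β (3 / 2 * β) y := fun y hy => by
    have h := mlReal_three_mul_pos (half_pos hβ) (by linarith) hy
    rwa [mul_div_cancel₀ β two_ne_zero, mul_div_left_comm, mul_comm] at h
  rcases le_or_gt 0 x with hx | hx
  · exact mlReal_pos_of_nonneg hβ (by linarith) hx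
  rcases hδ.eq_or_lt with rfl | hlt
  · exact hpos x hx
  · have h := mlReal_add_pos hβ (by positivity) (sub_pos.2 hlt) hpos hx
    rwa [add_sub_cancel] at h

end Positivity

/-- If `1 < β ≤ 4/3`, then `E_{β,2}(−z) > 0` for every `z > 0`; in particular
`z ↦ E_{β,2}(−z)` has no zeros on `(0,∞)`. -/
theorem mlReal_beta2_pos (β : ℝ) (hβ : 1 < β) (hβ' : β ≤ 4 / 3) :
    (∀ z : ℝ, 0 < z → 0 < mlReal β 2 (-z))
      ∧ ∀ z : ℝ, 0 < z → mlReal β 2 (-z) ≠ 0 := by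
  have hpos : ∀ x : ℝ, 0 < mlReal β 2 x :=
    mlReal_beta2_pos_general (by linarith) (by linarith) (by linarith)
  exact ⟨fun z _ => hpos (-z), fun z _ => (hpos (-z)).ne'⟩
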